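/- arXiv:1007.5226 — 2 statements merged into one kernel-verified Lean document; each statement's English description precedes it below -/
import Mathlib

section
/- Closed-form evaluation of the fixed-order partial Shannon number. For every N > 0 and every integer m ≥ 0, 4N ∫_0^1 ∫_0^1 J_m(2√N p ξ)² p dp ξ dξ = 2N [J_m(2√N)² + J_{m+1}(2√N)²] − (2m+1)√N J_m(2√N) J_{m+1}(2√N) − (m/2)[1 − J₀(2√N)² − 2∑_{n=1}^m J_n(2√N)²]. -/
open MeasureTheory Real

noncomputable section

/-- Bessel function of the first kind of integer order `m`, via Bessel's integral
`J_m(z) = π⁻¹ ∫_0^π cos(mθ − z sin θ) dθ`. -/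
def besselJ (m : ℤ) (z : ℝ) : ℝ :=
  π⁻¹ * ∫ θ in (0:ℝ)..π, Real.cos (m * θ - z * Real.sin θ)

/-!
After rescaling, the inner integral is `H t / t ^ 2` with `H t = ∫ s in 0..t, J_m(s) ^ 2 * s`, which
the three-term recurrence evaluates in terms of `J_m` and `J_{m+1}`. Dividing by `t` leaves
`t / 2 * (J_m ^ 2 + J_{m+1} ^ 2) - m * J_m * J_{m+1}`. Its first term again has an elementary
primitive; the second one brings in the finite sum of squares, because
`(J_n ^ 2)' = J_{n-1} * J_n - J_n * J_{n+1}` telescopes.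
-/

theorem sq_mul_integral_comp_mul_left_mul (f : ℝ → ℝ) (a b c : ℝ) :
    c ^ 2 * ∫ p in a..b, f (c * p) * p = ∫ t in c * a..c * b, f t * t := by
  rw [← intervalIntegral.mul_integral_comp_mul_left (f := fun t ↦ f t * t), sq, mul_assoc,
    ← intervalIntegral.integral_const_mul]
  simp only [mul_left_comm]

theorem continuous_besselJ_integrand (m : ℤ) (z : ℝ) :
    Continuous fun θ : ℝ ↦ cos (m * θ - z * sin θ) := by
  fun_prop

theorem besselJ_neg (m : ℤ) (z : ℝ) : besselJ (-m) z = (-1) ^ m * besselJ m z := by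
  have reflect (θ : ℝ) : cos ((-m : ℤ) * (π - θ) - z * sin (π - θ)) =
      (-1) ^ m * cos (m * θ - z * sin θ) := by
    rw [sin_pi_sub, ← cos_int_mul_pi_sub, ← cos_neg]
    push_cast
    ring_nf
  have integral_reflect := intervalIntegral.integral_comp_sub_left (a := 0) (b := π)
    (fun θ ↦ cos ((-m : ℤ) * θ - z * sin θ)) π
  simp only [reflect, sub_self, sub_zero, intervalIntegral.integral_const_mul] at integral_reflect
  rw [besselJ, ← integral_reflect, besselJ, mul_left_comm]

theorem besselJ_sub_one_sub_besselJ_add_one (m : ℤ) (z : ℝ) :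
    besselJ (m - 1) z - besselJ (m + 1) z =
      2 * (π⁻¹ * ∫ θ in (0 : ℝ)..π, sin θ * sin (m * θ - z * sin θ)) := by
  have integrand_sub (θ : ℝ) :
      cos ((m - 1 : ℤ) * θ - z * sin θ) - cos ((m + 1 : ℤ) * θ - z * sin θ) =
        2 * (sin θ * sin (m * θ - z * sin θ)) := by
    rw [mul_comm (sin θ), ← mul_assoc, two_mul_sin_mul_sin]
    push_cast
    ring_nf
  unfold besselJ
  rw [← mul_sub, ← intervalIntegral.integral_sub
    ((continuous_besselJ_integrand _ z).intervalIntegrable _ _)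
    ((continuous_besselJ_integrand _ z).intervalIntegrable _ _)]
  simp only [integrand_sub, intervalIntegral.integral_const_mul]
  ring

theorem besselJ_sub_one_add_besselJ_add_one (m : ℤ) (z : ℝ) :
    besselJ (m - 1) z + besselJ (m + 1) z =
      2 * (π⁻¹ * ∫ θ in (0 : ℝ)..π, cos θ * cos (m * θ - z * sin θ)) := by
  have integrand_add (θ : ℝ) :
      cos ((m - 1 : ℤ) * θ - z * sin θ) + cos ((m + 1 : ℤ) * θ - z * sin θ) =
        2 * (cos θ * cos (m * θ - z * sin θ)) := by
    rw [mul_comm (cos θ), ← mul_assoc, two_mul_cos_mul_cos]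
    push_cast
    ring_nf
  unfold besselJ
  rw [← mul_add, ← intervalIntegral.integral_add
    ((continuous_besselJ_integrand _ z).intervalIntegrable _ _)
    ((continuous_besselJ_integrand _ z).intervalIntegrable _ _)]
  simp only [integrand_add, intervalIntegral.integral_const_mul]
  ring

theorem hasDerivAt_besselJ (m : ℤ) (z : ℝ) :
    HasDerivAt (besselJ m) ((besselJ (m - 1) z - besselJ (m + 1) z) / 2) z := by
  have phase_deriv (θ y : ℝ) : HasDerivAt (fun y ↦ m * θ - y * sin θ) (-sin θ) y := by
    simpa using ((hasDerivAt_id y).mul_const (sin θ)).const_sub (m * θ)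
  have integrand_deriv (θ y : ℝ) : HasDerivAt (fun y ↦ cos (m * θ - y * sin θ))
      (sin θ * sin (m * θ - y * sin θ)) y :=
    (phase_deriv θ y).cos.congr_deriv (by ring)
  have deriv_bound (θ y : ℝ) : ‖sin θ * sin (m * θ - y * sin θ)‖ ≤ 1 := by
    rw [norm_eq_abs, abs_mul]
    exact mul_le_one₀ (abs_sin_le_one _) (abs_nonneg _) (abs_sin_le_one _)
  have h := (intervalIntegral.hasDerivAt_integral_of_dominated_loc_of_deriv_le
    (μ := volume) (a := 0) (b := π) (bound := fun _ ↦ 1) (x₀ := z) Filter.univ_mem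
    (.of_forall fun y ↦ (continuous_besselJ_integrand m y).aestronglyMeasurable)
    ((continuous_besselJ_integrand m z).intervalIntegrable _ _)
    (Continuous.aestronglyMeasurable (by fun_prop))
    (.of_forall fun θ _ y _ ↦ deriv_bound θ y) (by simp)
    (.of_forall fun θ _ y _ ↦ integrand_deriv θ y)).2
  rw [besselJ_sub_one_sub_besselJ_add_one, mul_div_cancel_left₀ _ two_ne_zero]
  exact h.const_mul π⁻¹

@[fun_prop]
theorem continuous_besselJ (m : ℤ) : Continuous (besselJ m) :=
  continuous_iff_continuousAt.2 fun z ↦ (hasDerivAt_besselJ m z).continuousAt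

theorem mul_besselJ_sub_one_add_besselJ_add_one (m : ℤ) (z : ℝ) :
    z * (besselJ (m - 1) z + besselJ (m + 1) z) = 2 * m * besselJ m z := by
  have phase_deriv (θ : ℝ) : HasDerivAt (fun θ ↦ m * θ - z * sin θ) (m - z * cos θ) θ := by
    simpa using ((hasDerivAt_id' θ).const_mul (m : ℝ)).fun_sub ((hasDerivAt_sin θ).const_mul z)
  have integral_deriv :
      ∫ θ in (0 : ℝ)..π, cos (m * θ - z * sin θ) * (m - z * cos θ) = 0 := by
    rw [intervalIntegral.integral_eq_sub_of_hasDerivAt (fun θ _ ↦ (phase_deriv θ).sin)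
      (Continuous.intervalIntegrable (by fun_prop) _ _)]
    simp [sin_int_mul_pi]
  have split (θ : ℝ) : cos (m * θ - z * sin θ) * (m - z * cos θ) =
      m * cos (m * θ - z * sin θ) - z * (cos θ * cos (m * θ - z * sin θ)) := by
    ring
  simp only [split] at integral_deriv
  rw [intervalIntegral.integral_sub (Continuous.intervalIntegrable (by fun_prop) _ _)
    (Continuous.intervalIntegrable (by fun_prop) _ _), intervalIntegral.integral_const_mul,
    intervalIntegral.integral_const_mul] at integral_deriv
  rw [besselJ_sub_one_add_besselJ_add_one, besselJ]
  linear_combination (-2 * π⁻¹) * integral_deriv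

theorem mul_besselJ_add_besselJ_add_two (m : ℤ) (z : ℝ) :
    z * (besselJ m z + besselJ (m + 1 + 1) z) = 2 * (m + 1) * besselJ (m + 1) z := by
  simpa using mul_besselJ_sub_one_add_besselJ_add_one (m + 1) z

theorem besselJ_zero_zero : besselJ 0 0 = 1 := by
  simp [besselJ, pi_ne_zero]

theorem besselJ_apply_zero_of_ne_zero {m : ℤ} (hm : m ≠ 0) : besselJ m 0 = 0 := by
  simpa [hm] using mul_besselJ_sub_one_add_besselJ_add_one m 0

theorem hasDerivAt_besselJ_add_one (m : ℤ) (z : ℝ) :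
    HasDerivAt (besselJ (m + 1)) ((besselJ m z - besselJ (m + 1 + 1) z) / 2) z := by
  simpa using hasDerivAt_besselJ (m + 1) z

theorem hasDerivAt_besselJ_zero (z : ℝ) : HasDerivAt (besselJ 0) (-besselJ 1 z) z := by
  refine (hasDerivAt_besselJ 0 z).congr_deriv ?_
  rw [zero_sub, zero_add, besselJ_neg, zpow_one]
  ring

theorem hasDerivAt_besselJ_sq (m : ℤ) (z : ℝ) :
    HasDerivAt (fun t ↦ besselJ m t ^ 2)
      (besselJ (m - 1) z * besselJ m z - besselJ m z * besselJ (m + 1) z) z :=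
  ((hasDerivAt_besselJ m z).pow 2).congr_deriv (by push_cast; ring)

theorem hasDerivAt_mul_besselJ_mul_besselJ_add_one (m : ℤ) (z : ℝ) :
    HasDerivAt (fun t ↦ t * (besselJ m t * besselJ (m + 1) t))
      (z * (besselJ m z ^ 2 - besselJ (m + 1) z ^ 2)) z := by
  refine ((hasDerivAt_id z).mul
    ((hasDerivAt_besselJ m z).mul (hasDerivAt_besselJ_add_one m z))).congr_deriv ?_
  simp only [id_eq, Pi.mul_apply]
  linear_combination
    besselJ (m + 1) z / 2 * mul_besselJ_sub_one_add_besselJ_add_one m z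
      - besselJ m z / 2 * mul_besselJ_add_besselJ_add_two m z

theorem hasDerivAt_sq_mul_besselJ_sq_add_besselJ_add_one_sq (m : ℤ) (z : ℝ) :
    HasDerivAt (fun t ↦ t ^ 2 * (besselJ m t ^ 2 + besselJ (m + 1) t ^ 2))
      (2 * z * ((m + 1) * besselJ m z ^ 2 - m * besselJ (m + 1) z ^ 2)) z := by
  refine ((hasDerivAt_pow 2 z).mul (((hasDerivAt_besselJ m z).pow 2).add
    ((hasDerivAt_besselJ_add_one m z).pow 2))).congr_deriv ?_
  simp only [Pi.add_apply, Pi.pow_apply]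
  push_cast
  linear_combination
    z * besselJ m z * mul_besselJ_sub_one_add_besselJ_add_one m z
      - z * besselJ (m + 1) z * mul_besselJ_add_besselJ_add_two m z

theorem integral_besselJ_sq_mul (m : ℤ) (x : ℝ) :
    ∫ t in (0 : ℝ)..x, besselJ m t ^ 2 * t =
      x ^ 2 / 2 * (besselJ m x ^ 2 + besselJ (m + 1) x ^ 2)
        - m * (x * (besselJ m x * besselJ (m + 1) x)) := by
  have primitive (t : ℝ) :=
    ((hasDerivAt_sq_mul_besselJ_sq_add_besselJ_add_one_sq m t).div_const 2).sub
      ((hasDerivAt_mul_besselJ_mul_besselJ_add_one m t).const_mul (m : ℝ))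
  rw [intervalIntegral.integral_eq_sub_of_hasDerivAt
    (fun t _ ↦ (primitive t).congr_deriv (by ring))
    (Continuous.intervalIntegrable (by fun_prop) _ _)]
  simp only [Pi.sub_apply]
  ring

theorem integral_besselJ_sq_add_besselJ_add_one_sq_mul (m : ℤ) (x : ℝ) :
    ∫ t in (0 : ℝ)..x, (besselJ m t ^ 2 + besselJ (m + 1) t ^ 2) * t =
      x ^ 2 * (besselJ m x ^ 2 + besselJ (m + 1) x ^ 2)
        - (2 * m + 1) * (x * (besselJ m x * besselJ (m + 1) x)) := by
  have primitive (t : ℝ) :=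
    (hasDerivAt_sq_mul_besselJ_sq_add_besselJ_add_one_sq m t).sub
      ((hasDerivAt_mul_besselJ_mul_besselJ_add_one m t).const_mul (2 * m + 1 : ℝ))
  rw [intervalIntegral.integral_eq_sub_of_hasDerivAt
    (fun t _ ↦ (primitive t).congr_deriv (by ring))
    (Continuous.intervalIntegrable (by fun_prop) _ _)]
  simp only [Pi.sub_apply]
  ring

theorem hasDerivAt_besselJ_zero_sq_add_two_mul_sum_sq (m : ℕ) (z : ℝ) :
    HasDerivAt (fun t ↦ besselJ 0 t ^ 2 + 2 * ∑ n ∈ Finset.Icc 1 m, besselJ n t ^ 2)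
      (-2 * (besselJ m z * besselJ (m + 1) z)) z := by
  induction m with
  | zero =>
    simpa [mul_assoc] using (hasDerivAt_besselJ_zero z).fun_pow 2
  | succ k ih =>
    simp only [Finset.sum_Icc_succ_top (Nat.le_add_left 1 k), mul_add, ← add_assoc]
    refine (ih.add ((hasDerivAt_besselJ_sq (k + 1 : ℕ) z).const_mul 2)).congr_deriv ?_
    push_cast
    rw [add_sub_cancel_right]
    ring

theorem two_mul_integral_besselJ_mul_besselJ_add_one (m : ℕ) (x : ℝ) :
    2 * ∫ t in (0 : ℝ)..x, besselJ m t * besselJ (m + 1) t =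
      1 - besselJ 0 x ^ 2 - 2 * ∑ n ∈ Finset.Icc 1 m, besselJ n x ^ 2 := by
  have sum_at_zero : ∑ n ∈ Finset.Icc 1 m, besselJ n 0 ^ 2 = 0 :=
    Finset.sum_eq_zero fun n hn ↦ by
      have : (n : ℤ) ≠ 0 := by grind
      rw [besselJ_apply_zero_of_ne_zero this, zero_pow two_ne_zero]
  have ftc := intervalIntegral.integral_eq_sub_of_hasDerivAt (a := 0) (b := x)
    (fun t _ ↦ hasDerivAt_besselJ_zero_sq_add_two_mul_sum_sq m t)
    (Continuous.intervalIntegrable (by fun_prop) _ _)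
  rw [intervalIntegral.integral_const_mul, sum_at_zero, besselJ_zero_zero] at ftc
  linear_combination -ftc

theorem integral_besselJ_mul_sq_mul_mul (m : ℤ) (t : ℝ) :
    (∫ p in (0 : ℝ)..1, besselJ m (t * p) ^ 2 * p) * t =
      (besselJ m t ^ 2 + besselJ (m + 1) t ^ 2) * t / 2
        - m * (besselJ m t * besselJ (m + 1) t) := by
  rcases eq_or_ne t 0 with rfl | ht
  · have mul_besselJ_zero : (m : ℝ) * besselJ m 0 = 0 := by
      linear_combination -mul_besselJ_sub_one_add_besselJ_add_one m 0 / 2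
    linear_combination besselJ (m + 1) 0 * mul_besselJ_zero
  · have scaled := sq_mul_integral_comp_mul_left_mul (fun s ↦ besselJ m s ^ 2) 0 1 t
    rw [mul_zero, mul_one, integral_besselJ_sq_mul] at scaled
    apply mul_left_cancel₀ ht
    linear_combination scaled

theorem sq_mul_integral_integral_besselJ_sq (m : ℤ) (x : ℝ) :
    x ^ 2 * ∫ ξ in (0 : ℝ)..1, (∫ p in (0 : ℝ)..1, besselJ m (x * p * ξ) ^ 2 * p) * ξ =
      (∫ t in (0 : ℝ)..x, (besselJ m t ^ 2 + besselJ (m + 1) t ^ 2) * t) / 2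
        - m * ∫ t in (0 : ℝ)..x, besselJ m t * besselJ (m + 1) t := by
  have scaled := sq_mul_integral_comp_mul_left_mul
    (fun t ↦ ∫ p in (0 : ℝ)..1, besselJ m (t * p) ^ 2 * p) 0 1 x
  simp only [mul_right_comm x _, mul_zero, mul_one, integral_besselJ_mul_sq_mul_mul] at scaled ⊢
  rw [scaled, intervalIntegral.integral_sub (Continuous.intervalIntegrable (by fun_prop) _ _)
    (Continuous.intervalIntegrable (by fun_prop) _ _), intervalIntegral.integral_div,
    intervalIntegral.integral_const_mul]

/-- Closed-form evaluation of the fixed-order partial Shannon number: for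
every `N > 0` and integer `m ≥ 0`,
`4N ∫_0^1 ∫_0^1 J_m(2√N pξ)² p dp ξ dξ
  = 2N[J_m(2√N)² + J_{m+1}(2√N)²] − (2m+1)√N J_m(2√N) J_{m+1}(2√N)
    − (m/2)[1 − J₀(2√N)² − 2∑_{n=1}^m J_n(2√N)²]`. -/
theorem partial_shannon_number_closed_form (N : ℝ) (hN : 0 < N) (m : ℕ) :
    4 * N * ∫ ξ in (0:ℝ)..1,
        (∫ p in (0:ℝ)..1, besselJ m (2 * Real.sqrt N * p * ξ) ^ 2 * p) * ξ =
      2 * N * (besselJ m (2 * Real.sqrt N) ^ 2 + besselJ (m + 1) (2 * Real.sqrt N) ^ 2)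
      - (2 * (m : ℝ) + 1) * Real.sqrt N *
          besselJ m (2 * Real.sqrt N) * besselJ (m + 1) (2 * Real.sqrt N)
      - ((m : ℝ) / 2) * (1 - besselJ 0 (2 * Real.sqrt N) ^ 2
          - 2 * ∑ n ∈ Finset.Icc 1 m, besselJ n (2 * Real.sqrt N) ^ 2) := by
  have sq_argument : (2 * √N) ^ 2 = 4 * N := by rw [mul_pow, sq_sqrt hN.le]; norm_num
  have reduction := sq_mul_integral_integral_besselJ_sq m (2 * √N)
  rw [integral_besselJ_sq_add_besselJ_add_one_sq_mul, sq_argument, Int.cast_natCast] at reduction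
  linear_combination
    reduction - (m : ℝ) / 2 * two_mul_integral_besselJ_mul_besselJ_add_one m (2 * √N)
end
end

section
/- Slepian's commuting tridiagonal matrix for the discrete prolate spheroidal sequences. Fix an integer N ≥ 1 and a real W. Define two N×N real matrices indexed by x, y ∈ {0, 1, …, N−1}: the sinc (concentration) matrix A with A_{xy} = sin[2πW(x−y)]/(π(x−y)) for x ≠ y and A_{xx} = 2W, and the symmetric tridiagonal matrix T with diagonal entries T_{xx} = [(N−1−2x)/2]² cos(2πW), off-diagonal entries T_{x,x+1} = T_{x+1,x} = (x+1)(N−x−1)/2, and all other entries zero. Then A and T commute: A·T = T·A. Consequently the discrete prolate spheroidal sequences, the eigenvectors of A, can be computed stably as eigenvectors of the tridiagonal matrix T. -/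
open Real Matrix

noncomputable section

/-!
Multiplying a sequence `v : ℤ → R` by a Jacobi matrix whose off-diagonal coefficients vanish at both
ends of the index range is a three-term recurrence with no boundary correction. Hence a Toeplitz
matrix with kernel `k` commutes with such a matrix as soon as, with `d = x - y`, a combination of
`k (d - 1)`, `k d` and `k (d + 1)` vanishes. For Slepian's coefficients this combination is
`(N - 1 - x - y) / 2` times `g (d + 1) + g (d - 1) - 2 c g d`, where `g d = d k d`. For the sinc
kernel, `g d` is `sin (2πWd) / π` and `c = cos (2πW)`, so it vanishes by the addition formula.
-/

section Jacobi

variable {R : Type*}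

/-- The `N × N` Toeplitz matrix with kernel `k`, indexed from zero. -/
def toeplitzMatrix (N : ℕ) (k : ℤ → R) : Matrix (Fin N) (Fin N) R :=
  of fun x y => k (x - y)

/-- The `N × N` symmetric tridiagonal (Jacobi) matrix with diagonal `a 0, …, a (N - 1)`. The
off-diagonal entry joining `x` and `x + 1` is `b (x + 1)`, so that `b 0` and `b N` are the
coefficients that would lead out of the index range. -/
def jacobiMatrix [Zero R] (N : ℕ) (a b : ℕ → R) : Matrix (Fin N) (Fin N) R :=
  of fun x y =>
    if x = y then a x
    else if (y : ℕ) = x + 1 then b y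
    else if (x : ℕ) = y + 1 then b x
    else 0

lemma isSymm_jacobiMatrix [Zero R] (N : ℕ) (a b : ℕ → R) : (jacobiMatrix N a b).IsSymm := by
  ext x y
  simp only [jacobiMatrix, transpose_apply, of_apply]
  grind

lemma jacobiMatrix_apply_eq_add [AddZeroClass R] (N : ℕ) (a b : ℕ → R) (x y : Fin N) :
    jacobiMatrix N a b x y =
      (if (x : ℕ) = y + 1 then b x else 0) + (if (x : ℕ) = y then a x else 0) +
        (if (y : ℕ) = x + 1 then b (x + 1) else 0) := by
  simp only [jacobiMatrix, of_apply, Fin.ext_iff]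
  split_ifs <;> first | omega | simp_all

lemma jacobiMatrix_mulVec_apply [NonUnitalNonAssocSemiring R] {N : ℕ} {a b : ℕ → R}
    (hb₀ : b 0 = 0) (hbN : b N = 0) (v : ℤ → R) (x : Fin N) :
    (jacobiMatrix N a b *ᵥ fun y => v y) x =
      b x * v (x - 1) + a x * v x + b (x + 1) * v (x + 1) := by
  have lower : ∑ y : Fin N, (if (x : ℕ) = y + 1 then b x * v y else 0) = b x * v (x - 1) := by
    rw [Fin.sum_univ_eq_sum_range (fun y : ℕ => if (x : ℕ) = y + 1 then b x * v y else 0)]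
    obtain ⟨_ | n, hn⟩ := x
    · simp [hb₀]
    · simp [Nat.lt_of_succ_lt hn]
  have diagonal : ∑ y : Fin N, (if (x : ℕ) = y then a x * v y else 0) = a x * v x := by
    simp [← Fin.ext_iff]
  have upper : ∑ y : Fin N, (if (y : ℕ) = x + 1 then b (x + 1) * v y else 0) =
      b (x + 1) * v (x + 1) := by
    rw [Fin.sum_univ_eq_sum_range (fun y : ℕ => if y = (x : ℕ) + 1 then b (x + 1) * v y else 0)]
    obtain h | h := (Nat.succ_le_of_lt x.isLt).lt_or_eq
    · simp [h]
    · have hb : b (x + 1) = 0 := (congrArg b h).trans hbN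
      simp [hb]
  simp only [mulVec, dotProduct, jacobiMatrix_apply_eq_add, add_mul, ite_mul, zero_mul,
    Finset.sum_add_distrib, lower, diagonal, upper]

lemma commute_toeplitzMatrix_jacobiMatrix [CommRing R] {N : ℕ} {a b : ℕ → R} {k : ℤ → R}
    (hb₀ : b 0 = 0) (hbN : b N = 0)
    (h : ∀ x y : Fin N, (b x - b (y + 1)) * k (x - y - 1) + (a x - a y) * k (x - y) +
      (b (x + 1) - b y) * k (x - y + 1) = 0) :
    Commute (toeplitzMatrix N k) (jacobiMatrix N a b) := by
  rw [commute_iff_eq]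
  ext x y
  have left := calc (toeplitzMatrix N k * jacobiMatrix N a b) x y
    _ = (jacobiMatrix N a b *ᵥ fun z : Fin N => k (x - z)) y := by
      rw [mul_apply_eq_vecMul, ← mulVec_transpose, (isSymm_jacobiMatrix N a b).eq]
      rfl
    _ = b y * k (x - (y - 1)) + a y * k (x - y) + b (y + 1) * k (x - (y + 1)) :=
      jacobiMatrix_mulVec_apply hb₀ hbN (fun z => k (x - z)) y
    _ = b y * k (x - y + 1) + a y * k (x - y) + b (y + 1) * k (x - y - 1) := by
      rw [sub_add, sub_sub]
  have right := calc (jacobiMatrix N a b * toeplitzMatrix N k) x y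
    _ = b x * k (x - 1 - y) + a x * k (x - y) + b (x + 1) * k (x + 1 - y) :=
      jacobiMatrix_mulVec_apply hb₀ hbN (fun z => k (z - y)) x
    _ = b x * k (x - y - 1) + a x * k (x - y) + b (x + 1) * k (x - y + 1) := by
      rw [sub_right_comm, sub_add_eq_add_sub]
  rw [left, right]
  linear_combination -h x y

end Jacobi

section Slepian

variable {K : Type*} [Field K]

/-- Slepian's tridiagonal matrix, with the value `cos (2πW)` of the bandwidth parameter replaced by
an arbitrary scalar `c`. -/
def slepianMatrix (N : ℕ) (c : K) : Matrix (Fin N) (Fin N) K :=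
  jacobiMatrix N (fun x => (((N : K) - 1 - 2 * x) / 2) ^ 2 * c) (fun x => x * ((N : K) - x) / 2)

lemma commute_toeplitzMatrix_slepianMatrix [NeZero (2 : K)] (N : ℕ) {c : K} {k : ℤ → K}
    (hk : ∀ d : ℤ, (d + 1) * k (d + 1) + (d - 1) * k (d - 1) = 2 * c * (d * k d)) :
    Commute (toeplitzMatrix N k) (slepianMatrix N c) := by
  refine commute_toeplitzMatrix_jacobiMatrix (by simp) (by simp) fun x y => ?_
  have recurrence := hk (x - y)
  push_cast at recurrence ⊢
  have two_ne_zero : (2 : K) ≠ 0 := NeZero.ne 2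
  field_simp
  linear_combination 2 * ((N : K) - 1 - x - y) * recurrence

end Slepian

/-- The kernel `t ↦ sin (2πWt) / (πt)` of the band-limiting operator, written with `Real.sinc` so
that it takes the value `2W` at `t = 0`. -/
def sincKernel (W t : ℝ) : ℝ :=
  2 * W * sinc (2 * π * W * t)

lemma mul_sinc (t : ℝ) : t * sinc t = sin t := by
  obtain rfl | ht := eq_or_ne t 0
  · simp
  · rw [sinc_of_ne_zero ht, mul_div_cancel₀ _ ht]

lemma mul_sincKernel (W t : ℝ) : t * sincKernel W t = sin (2 * π * W * t) / π := by
  rw [sincKernel, ← mul_sinc]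
  field_simp

lemma sincKernel_of_ne_zero (W : ℝ) {t : ℝ} (ht : t ≠ 0) :
    sincKernel W t = sin (2 * π * W * t) / (π * t) := by
  rw [← div_div, ← mul_sincKernel, mul_div_cancel_left₀ _ ht]

lemma sincKernel_recurrence (W t : ℝ) :
    (t + 1) * sincKernel W (t + 1) + (t - 1) * sincKernel W (t - 1) =
      2 * cos (2 * π * W) * (t * sincKernel W t) := by
  simp only [mul_sincKernel, mul_add, mul_sub, mul_one, sin_add, sin_sub]
  ring

/-- Slepian's commuting tridiagonal matrix for the discrete prolate
spheroidal sequences.  For `N ≥ 1` and `W : ℝ`, the `N×N` sinc concentration matrix `A`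
with `A_{xy} = sin[2πW(x−y)]/(π(x−y))` (diagonal value `2W`) commutes with the symmetric
tridiagonal matrix `T` with `T_{xx} = [(N−1−2x)/2]² cos(2πW)` and
`T_{x,x+1} = T_{x+1,x} = (x+1)(N−x−1)/2`: `A·T = T·A`.  Hence the dpss, the eigenvectors
of `A`, can be computed stably as eigenvectors of `T`. -/
theorem dpss_tridiagonal_commutes
    (N : ℕ) (hN : 1 ≤ N) (W : ℝ)
    (A T : Matrix (Fin N) (Fin N) ℝ)
    (hA : ∀ x y : Fin N, A x y =
      if x = y then 2 * W
      else Real.sin (2 * π * W * ((x : ℝ) - (y : ℝ))) / (π * ((x : ℝ) - (y : ℝ))))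
    (hT : ∀ x y : Fin N, T x y =
      if x = y then (((N : ℝ) - 1 - 2 * (x : ℝ)) / 2) ^ 2 * Real.cos (2 * π * W)
      else if (y : ℕ) = (x : ℕ) + 1 then ((x : ℝ) + 1) * ((N : ℝ) - (x : ℝ) - 1) / 2
      else if (x : ℕ) = (y : ℕ) + 1 then ((y : ℝ) + 1) * ((N : ℝ) - (y : ℝ) - 1) / 2
      else 0) :
    A * T = T * A := by
  have hA_toeplitz : A = toeplitzMatrix N fun d => sincKernel W d := by
    ext x y
    rw [hA, toeplitzMatrix, of_apply]
    push_cast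
    split_ifs with hxy
    · simp [hxy, sincKernel]
    · exact (sincKernel_of_ne_zero W (sub_ne_zero.mpr (by simpa [Fin.ext_iff] using hxy))).symm
  have hT_slepian : T = slepianMatrix N (cos (2 * π * W)) := by
    ext x y
    rw [hT, slepianMatrix, jacobiMatrix, of_apply]
    split_ifs with _ hy hx
    · rfl
    · simp [hy, sub_sub]
    · simp [hx, sub_sub]
    · rfl
  rw [hA_toeplitz, hT_slepian]
  exact commute_toeplitzMatrix_slepianMatrix N fun d => by
    exact_mod_cast sincKernel_recurrence W d
end
end
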